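/- For all indices i, j ∈ {1,2,3} and every point (r,v) of phase space with A(r,v) ≠ 0, the components of the LRL direction vector Poisson-commute with one another: {Θ_i, Θ_j}(r,v) = 0. -/

import Mathlib

/-!
Write `A` for the LRL vector and `P = 1 - A Aᵀ / ‖A‖²` for the projection onto `A^⊥`. The chain rule
gives `∇Θ_i = ‖A‖⁻¹ ∑_a P_{ia} ∇A_a`, hence `{Θ_i, Θ_j} = ‖A‖⁻² ∑_{a,b} P_{ia} P_{jb} {A_a, A_b}`.
Since `{A_a, A_b} = -2E ∑_k ε_{abk} L_k`, compressing this antisymmetric form to the plane `A^⊥`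
leaves a multiple of `L · A`, which vanishes.

The gradients are computed in `gradient_normalized_apply`, `hasFDerivAt_lrl_r` and
`hasFDerivAt_lrl_v`; `lrl_bracket` is the bracket of the components of `A`, and
`projected_bracket_eq_zero` is the final linear algebra.
-/

noncomputable section

/-- Physical 3-space. -/
abbrev E3 : Type := EuclideanSpace ℝ (Fin 3)

/-- Build a vector in `E3` from its components. -/
def toE3 (f : Fin 3 → ℝ) : E3 := (EuclideanSpace.equiv (Fin 3) ℝ).symm f

/-- Cross product in `ℝ³`. -/
def cross (a b : E3) : E3 :=
  toE3 ![a 1 * b 2 - a 2 * b 1, a 2 * b 0 - a 0 * b 2, a 0 * b 1 - a 1 * b 0]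

/-- Dot product in `ℝ³`. -/
def dot (a b : E3) : ℝ := ∑ i, a i * b i

/-- Gradient in the `r` variable of a function on phase space. -/
def gradR (F : E3 × E3 → ℝ) (p : E3 × E3) : E3 := gradient (fun x => F (x, p.2)) p.1

/-- Gradient in the `v` variable of a function on phase space. -/
def gradV (F : E3 × E3 → ℝ) (p : E3 × E3) : E3 := gradient (fun y => F (p.1, y)) p.2

/-- Poisson bracket of two functions on phase space. -/
def pb (F G : E3 × E3 → ℝ) (p : E3 × E3) : ℝ :=
  dot (gradR F p) (gradV G p) - dot (gradR G p) (gradV F p)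

/-- Energy `E(r,v) = (1/2)‖v‖² − κ/‖r‖`. -/
def energy (κ : ℝ) (p : E3 × E3) : ℝ := (1/2) * ‖p.2‖^2 - κ / ‖p.1‖

/-- Angular momentum `L(r,v) = r × v`. -/
def angMom (p : E3 × E3) : E3 := cross p.1 p.2

/-- Laplace–Runge–Lenz vector `A(r,v) = v × L − κ r/‖r‖`. -/
def lrl (κ : ℝ) (p : E3 × E3) : E3 := cross p.2 (angMom p) - (κ / ‖p.1‖) • p.1

/-- LRL direction vector `Θ = A/‖A‖`. -/
def lrlDir (κ : ℝ) (p : E3 × E3) : E3 := ‖lrl κ p‖⁻¹ • lrl κ p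

/-- Levi-Civita symbol `ε_{ijk}` on indices in `{0,1,2}`. -/
def eps (i j k : Fin 3) : ℝ :=
  (((j : ℕ) : ℝ) - ((i : ℕ) : ℝ)) * (((k : ℕ) : ℝ) - ((i : ℕ) : ℝ))
    * (((k : ℕ) : ℝ) - ((j : ℕ) : ℝ)) / 2

lemma gradient_apply_of_hasFDerivAt {f : E3 → ℝ} {f' : E3 →L[ℝ] ℝ} {x : E3}
    (h : HasFDerivAt f f' x) (k : Fin 3) :
    gradient f x k = f' (EuclideanSpace.single k 1) := by
  have h1 : inner ℝ (gradient f x) (EuclideanSpace.single k (1 : ℝ))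
      = f' (EuclideanSpace.single k 1) := by
    rw [gradient, h.fderiv]
    exact InnerProductSpace.toDual_symm_apply
  rw [← h1, EuclideanSpace.inner_single_right]
  simp

lemma hasFDerivAt_norm_inv {x : E3} (hx : x ≠ 0) :
    HasFDerivAt (fun y : E3 => ‖y‖⁻¹) (-(‖x‖⁻¹ ^ 3) • innerSL ℝ x) x := by
  have hn : ‖x‖ ≠ 0 := norm_ne_zero_iff.mpr hx
  have h1 : HasFDerivAt (fun y : E3 => ‖y‖ ^ 2) (2 • innerSL ℝ x) x :=
    (hasStrictFDerivAt_norm_sq x).hasFDerivAt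
  have h2 := h1.sqrt (pow_ne_zero 2 hn)
  simp only [Real.sqrt_sq (norm_nonneg _)] at h2
  have h3 := (hasDerivAt_inv hn).comp_hasFDerivAt x h2
  refine h3.congr_fderiv ?_
  ext y
  simp
  field_simp

lemma hasFDerivAt_coord (i : Fin 3) (x : E3) :
    HasFDerivAt (fun y : E3 => y i) (EuclideanSpace.proj i : E3 →L[ℝ] ℝ) x :=
  (EuclideanSpace.proj i : E3 →L[ℝ] ℝ).hasFDerivAt

/-- The gradient of a component of `f / ‖f‖`, with `D a` the differential of the `a`-th component
of `f`. -/
lemma gradient_normalized_apply {f : E3 → E3} {D : Fin 3 → E3 →L[ℝ] ℝ} {x : E3}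
    (hD : ∀ a, HasFDerivAt (fun y => f y a) (D a) x) (hf : f x ≠ 0) (i k : Fin 3) :
    gradient (fun y => (‖f y‖⁻¹ • f y) i) x k =
      ‖f x‖⁻¹ * D i (EuclideanSpace.single k 1)
        - f x i * ‖f x‖⁻¹ ^ 3 * ∑ a, f x a * D a (EuclideanSpace.single k 1) := by
  have h0 : ∃ f' : E3 →L[ℝ] E3, HasFDerivAt f f' x ∧ ∀ a y, f' y a = D a y := by
    have : DifferentiableAt ℝ f x := by
      rw [differentiableAt_euclidean]
      exact fun a => (hD a).differentiableAt
    refine ⟨fderiv ℝ f x, this.hasFDerivAt, fun a y => ?_⟩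
    have h := (hasFDerivAt_coord a (f x)).comp x this.hasFDerivAt
    have h' := h.unique (hD a)
    rw [← h']
    rfl
  obtain ⟨f', hf', hfD⟩ := h0
  have h1 := ((hasFDerivAt_norm_inv hf).comp x hf').mul (hD i)
  have h2 := gradient_apply_of_hasFDerivAt h1 k
  refine Eq.trans ?_ (h2.trans ?_)
  · rfl
  · simp [PiLp.inner_apply, Fin.sum_univ_three, hfD]
    ring

lemma lrl_apply (κ : ℝ) (r v : E3) (i : Fin 3) :
    lrl κ (r, v) i = r i * dot v v - v i * dot r v - κ * (‖r‖⁻¹ * r i) := by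
  fin_cases i <;> simp [lrl, angMom, cross, toE3, dot, Fin.sum_univ_three] <;> ring

lemma hasFDerivAt_dot_left (v x : E3) :
    HasFDerivAt (fun y : E3 => dot y v) (innerSL ℝ v) x := by
  have h : (fun y : E3 => dot y v) = innerSL ℝ v := by
    ext y
    simp [dot, PiLp.inner_apply]
  rw [h]
  exact (innerSL ℝ v).hasFDerivAt

lemma hasFDerivAt_lrl_r (κ : ℝ) (r v : E3) (hr : r ≠ 0) (i : Fin 3) :
    ∃ D : E3 →L[ℝ] ℝ, HasFDerivAt (fun y => lrl κ (y, v) i) D r ∧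
      ∀ h : E3, D h = h i * dot v v - v i * dot h v
        - κ * (‖r‖⁻¹ * h i - ‖r‖⁻¹ ^ 3 * dot r h * r i) := by
  simp only [lrl_apply]
  refine ⟨_, (((hasFDerivAt_coord i r).mul_const (dot v v)).sub
    ((hasFDerivAt_dot_left v r).const_mul (v i))).sub
    (((hasFDerivAt_norm_inv hr).mul (hasFDerivAt_coord i r)).const_mul κ), fun h => ?_⟩
  simp [PiLp.inner_apply, dot, Fin.sum_univ_three]
  ring

lemma hasFDerivAt_lrl_v (κ : ℝ) (r v : E3) (i : Fin 3) :
    ∃ D : E3 →L[ℝ] ℝ, HasFDerivAt (fun y => lrl κ (r, y) i) D v ∧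
      ∀ h : E3, D h = 2 * r i * dot v h - h i * dot r v - v i * dot r h := by
  have hd : HasFDerivAt (fun y : E3 => dot r y) (innerSL ℝ r) v := by
    have h : (fun y : E3 => dot r y) = fun y => dot y r := by
      ext y
      simp [dot, mul_comm]
    rw [h]
    exact hasFDerivAt_dot_left r v
  have hs : HasFDerivAt (fun y : E3 => dot y y) (2 • innerSL ℝ v) v := by
    have h : (fun y : E3 => dot y y) = fun y => ‖y‖ ^ 2 := by
      ext y
      simp only [dot, EuclideanSpace.real_norm_sq_eq, ← sq]
    rw [h]
    exact (hasStrictFDerivAt_norm_sq v).hasFDerivAt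
  simp only [lrl_apply]
  refine ⟨_, ((hs.const_mul (r i)).sub ((hasFDerivAt_coord i v).mul hd)).sub_const _, fun h => ?_⟩
  simp [PiLp.inner_apply, dot, Fin.sum_univ_three]
  ring

/-- `{A_a, A_b} = -2E (r_a v_b - r_b v_a)`, with `ρ` in the role of `1 / ‖r‖` and the partial
derivatives of `A` inserted. -/
lemma lrl_bracket (κ ρ : ℝ) (r v : E3) (hρ : ρ ^ 2 * dot r r = 1) (R V : Fin 3 → Fin 3 → ℝ)
    (hR : ∀ a k, R a k = EuclideanSpace.single k (1 : ℝ) a * dot v v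
      - v a * dot (EuclideanSpace.single k 1) v - κ * (ρ * EuclideanSpace.single k (1 : ℝ) a
        - ρ ^ 3 * dot r (EuclideanSpace.single k 1) * r a))
    (hV : ∀ a k, V a k = 2 * r a * dot v (EuclideanSpace.single k 1)
      - EuclideanSpace.single k (1 : ℝ) a * dot r v - v a * dot r (EuclideanSpace.single k 1))
    (a b : Fin 3) :
    ∑ k, (R a k * V b k - R b k * V a k)
      = (2 * κ * ρ - dot v v) * (r a * v b - r b * v a) := by
  have h := congrArg (fun t => κ * ρ * (r a * v b - r b * v a) * t) hρ
  simp only [hR, hV]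
  simp only [dot, Fin.sum_univ_three] at h ⊢
  fin_cases a <;> fin_cases b <;> simp at h ⊢ <;> linear_combination -h

/-- An antisymmetric form `B` on `ℝ³` whose axial vector is orthogonal to `a` vanishes after
compression to the plane `a^⊥`; here `n = 1 / ‖a‖` and `B` is the form
`B_{bc} = ∑_k (R_{bk} V_{ck} - R_{ck} V_{bk})`. -/
lemma projected_bracket_eq_zero (n : ℝ) (a : Fin 3 → ℝ) (R V : Fin 3 → Fin 3 → ℝ)
    (hn : n ^ 2 * ∑ c, a c * a c = 1)
    (hS : a 0 * ∑ k, (R 1 k * V 2 k - R 2 k * V 1 k)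
      + a 1 * ∑ k, (R 2 k * V 0 k - R 0 k * V 2 k)
      + a 2 * ∑ k, (R 0 k * V 1 k - R 1 k * V 0 k) = 0) (i j : Fin 3) :
    ∑ k, (n * R i k - a i * n ^ 3 * ∑ c, a c * R c k)
        * (n * V j k - a j * n ^ 3 * ∑ c, a c * V c k)
      - ∑ k, (n * R j k - a j * n ^ 3 * ∑ c, a c * R c k)
        * (n * V i k - a i * n ^ 3 * ∑ c, a c * V c k) = 0 := by
  simp only [Fin.sum_univ_three] at *
  -- With `B` as above, the left side is `n² B_{ij} (1 - n² ‖a‖²) ± n⁴ a_k (a · axial vector of B)`,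
  -- where `k` is the third index.
  fin_cases i <;> fin_cases j <;> simp only [Fin.zero_eta, Fin.mk_one, Fin.reduceFinMk]
  · ring
  · linear_combination -n ^ 2 * (R 0 0 * V 1 0 - R 1 0 * V 0 0 + (R 0 1 * V 1 1 - R 1 1 * V 0 1)
      + (R 0 2 * V 1 2 - R 1 2 * V 0 2)) * hn + n ^ 4 * a 2 * hS
  · linear_combination -n ^ 2 * (R 0 0 * V 2 0 - R 2 0 * V 0 0 + (R 0 1 * V 2 1 - R 2 1 * V 0 1)
      + (R 0 2 * V 2 2 - R 2 2 * V 0 2)) * hn - n ^ 4 * a 1 * hS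
  · linear_combination -n ^ 2 * (R 1 0 * V 0 0 - R 0 0 * V 1 0 + (R 1 1 * V 0 1 - R 0 1 * V 1 1)
      + (R 1 2 * V 0 2 - R 0 2 * V 1 2)) * hn - n ^ 4 * a 2 * hS
  · ring
  · linear_combination -n ^ 2 * (R 1 0 * V 2 0 - R 2 0 * V 1 0 + (R 1 1 * V 2 1 - R 2 1 * V 1 1)
      + (R 1 2 * V 2 2 - R 2 2 * V 1 2)) * hn + n ^ 4 * a 0 * hS
  · linear_combination -n ^ 2 * (R 2 0 * V 0 0 - R 0 0 * V 2 0 + (R 2 1 * V 0 1 - R 0 1 * V 2 1)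
      + (R 2 2 * V 0 2 - R 0 2 * V 2 2)) * hn + n ^ 4 * a 1 * hS
  · linear_combination -n ^ 2 * (R 2 0 * V 1 0 - R 1 0 * V 2 0 + (R 2 1 * V 1 1 - R 1 1 * V 2 1)
      + (R 2 2 * V 1 2 - R 1 2 * V 2 2)) * hn - n ^ 4 * a 0 * hS
  · ring

/-- The components of the LRL direction vector Poisson-commute with one another:
`{Θ_i, Θ_j}(r,v) = 0` at points with `A(r,v) ≠ 0`. -/
theorem poisson_lrlDir_lrlDir (κ : ℝ) (hκ : 0 < κ) (i j : Fin 3)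
    (r v : E3) (hr : r ≠ 0) (hA : lrl κ (r, v) ≠ 0) :
    pb (fun p => lrlDir κ p i) (fun p => lrlDir κ p j) (r, v) = 0 := by
  choose DR hDR hDR' using hasFDerivAt_lrl_r κ r v hr
  choose DV hDV hDV' using hasFDerivAt_lrl_v κ r v
  have hR := gradient_normalized_apply (f := fun y => lrl κ (y, v)) hDR hA
  have hV := gradient_normalized_apply (f := fun y => lrl κ (r, y)) hDV hA
  have inv_sq : ∀ x : E3, x ≠ 0 → ‖x‖⁻¹ ^ 2 * ∑ c, x c * x c = 1 := by
    intro x hx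
    have h : ∑ c, x c * x c = ‖x‖ ^ 2 := by
      simp only [EuclideanSpace.real_norm_sq_eq, ← sq]
    have := norm_ne_zero_iff.mpr hx
    rw [h]
    field_simp
  have hB := lrl_bracket κ ‖r‖⁻¹ r v (inv_sq r hr)
    (fun a k => DR a (EuclideanSpace.single k 1)) (fun a k => DV a (EuclideanSpace.single k 1))
    (fun a k => hDR' a _) (fun a k => hDV' a _)
  have key := projected_bracket_eq_zero ‖lrl κ (r, v)‖⁻¹ (fun c => lrl κ (r, v) c)
    (fun a k => DR a (EuclideanSpace.single k 1)) (fun a k => DV a (EuclideanSpace.single k 1))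
    (inv_sq _ hA) (by
      simp only [hB]
      -- What remains is `A · L = 0`.
      simp only [lrl_apply, dot, Fin.sum_univ_three]
      ring) i j
  simp only [pb, gradR, gradV, lrlDir, dot]
  simp only [hR, hV]
  exact key
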